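/- Let ℓ≥1, n≥0, m≥0 and let σ ∈ D_{ℓ,n} be a colored derangement. The map (i_1,…,i_m) ↦ ⟨σ, i_1, …, i_m⟩ is a bijection from the set of weakly increasing sequences 0 ≤ i_1 ≤ i_2 ≤ ⋯ ≤ i_m ≤ n onto the set G(σ,m) = {τ ∈ G_{ℓ,n+m} : Der(τ) = σ}; the fixed points of ⟨σ,i_1,…,i_m⟩ are i_1+1, i_2+2, …, i_m+m, and fmaf⟨σ, i_1, …, i_m⟩ = fmaj σ + ℓ·(i_1 + i_2 + ⋯ + i_m). -/

import Mathlib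

/-! The positions and the values of the non-fixed letters of a colored permutation `τ` form the
same set, the complement of `fixSet τ`. Hence `Der τ` is `τ` conjugated by the increasing
enumeration of that set (`CP.castCP_Der_eq_iff`), and so `τ` is determined by `fixSet τ` and
`Der τ` (`CP.eq_of_fixSet_of_Der`). Conversely, extending the derangement `σ` along the
enumeration of `Fᶜ` by uncolored fixed points on `F` realizes every pair `(F, σ)` with
`#Fᶜ = n`; no further fixed points arise because `σ` has none (`CP.exists_insertion`).

The insertion map is this extension with `F = insPos s`, and the bijectivity reduces to that of
`s ↦ insPos s` from weakly increasing sequences to `m`-element sets of positions, whose inverse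
subtracts `0, 1, …, m - 1` from the elements in increasing order (`insPos_injective`,
`exists_insPos_eq`). For `fmaf`, the sum of the positions in `insPos s` exceeds the sum of `s`
by `m.choose 2`, the term subtracted in `maf`, and `col` is unaffected by uncolored letters. -/

open Finset

/-- A colored permutation in `G_{ℓ,n} ≅ C_ℓ ≀ S_n`: an underlying permutation of `Fin n`
together with a color (exponent of `ζ`) attached to each position. The letter at (0-based)
position `i` of the word of `σ` is `ζ^(σ.2 i) · (σ.1 i + 1)` (1-based value `σ.1 i + 1`). -/
abbrev CP (ℓ n : ℕ) := Equiv.Perm (Fin n) × (Fin n → Fin ℓ)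

namespace CP

variable {ℓ n : ℕ}

/-- `gtLetter a b` : the letter `a = (colorIndex, value)` is greater than `b` in the order
`1 > ζ > ⋯ > ζ^{ℓ-1}` on colors, colors compared first. -/
def gtLetter (a b : ℕ × ℕ) : Prop := a.1 < b.1 ∨ (a.1 = b.1 ∧ b.2 < a.2)

instance (a b : ℕ × ℕ) : Decidable (gtLetter a b) := by unfold gtLetter; infer_instance

/-- The letter (color index, 0-based absolute value) at 0-based position `i`. -/
def letter (σ : CP ℓ n) (i : ℕ) : ℕ × ℕ :=
  if h : i < n then ((σ.2 ⟨i, h⟩ : ℕ), (σ.1 ⟨i, h⟩ : ℕ)) else (0, 0)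

/-- 0-based descent positions : `i < n-1` such that `x_{i+1} > x_{i+2}` (1-based positions). -/
def desSet (σ : CP ℓ n) : Finset ℕ :=
  (range (n - 1)).filter fun i => gtLetter (letter σ i) (letter σ (i + 1))

/-- Major index: sum of the (1-based) descent places. -/
def maj (σ : CP ℓ n) : ℕ := ∑ i ∈ desSet σ, (i + 1)

/-- Number of descents. -/
def des (σ : CP ℓ n) : ℕ := (desSet σ).card

/-- `col σ = Σ_j j·#{i : ε_{x_i} = ζ^j}`. -/
def col (σ : CP ℓ n) : ℕ := ∑ i, (σ.2 i : ℕ)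

/-- flag major index. -/
def fmaj (σ : CP ℓ n) : ℕ := ℓ * maj σ + col σ

/-- The set of fixed points (position fixed and color `ζ^0 = 1`). -/
def fixSet (σ : CP ℓ n) : Finset (Fin n) :=
  univ.filter fun i => σ.1 i = i ∧ (σ.2 i : ℕ) = 0

def fix (σ : CP ℓ n) : ℕ := (fixSet σ).card

/-- Number of excedances `x_i > i`. -/
def exc (σ : CP ℓ n) : ℕ :=
  (univ.filter fun i : Fin n => (σ.2 i : ℕ) = 0 ∧ (i : ℕ) < (σ.1 i : ℕ)).card

lemma card_nonfix (σ : CP ℓ n) : ((fixSet σ)ᶜ).card = n - fix σ := by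
  rw [Finset.card_compl, fix, Fintype.card_fin]

lemma card_vals (σ : CP ℓ n) : (((fixSet σ)ᶜ).image σ.1).card = n - fix σ := by
  rw [Finset.card_image_of_injective _ σ.1.injective, card_nonfix]

/-- The bijection from nonfixed positions to the set of their values. -/
def derMid (σ : CP ℓ n) :
    {x // x ∈ ((fixSet σ)ᶜ : Finset (Fin n))} ≃ {x // x ∈ ((fixSet σ)ᶜ).image σ.1} where
  toFun p := ⟨σ.1 p.1, Finset.mem_image_of_mem _ p.2⟩
  invFun v := ⟨σ.1.symm v.1, by
    obtain ⟨p, hp, hpv⟩ := Finset.mem_image.mp v.2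
    simpa [← hpv] using hp⟩
  left_inv p := by simp
  right_inv v := by simp

/-- The derangement part `Der σ`: delete the fixed points of the word of `σ`, replace each
absolute value by its rank among the remaining values, and keep the colors. -/
def Der (σ : CP ℓ n) : CP ℓ (n - fix σ) :=
  let eP := ((fixSet σ)ᶜ).orderIsoOfFin (card_nonfix σ)
  let eV := (((fixSet σ)ᶜ).image σ.1).orderIsoOfFin (card_vals σ)
  (eP.toEquiv.trans ((derMid σ).trans eV.toEquiv.symm), fun i => σ.2 (eP i))

/-- `maf σ = maj (Der σ) + Σ_{j=1}^k (i_j − j)` over the (1-based) fixed points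
`i_1 < ⋯ < i_k`; with 0-based fixed positions this is `Σ f − k(k−1)/2`. -/
def maf (σ : CP ℓ n) : ℕ := maj (Der σ) + ((∑ i ∈ fixSet σ, (i : ℕ)) - (fix σ).choose 2)

/-- flag maf. -/
def fmaf (σ : CP ℓ n) : ℕ := ℓ * maf σ + col σ

end CP

/-- The q-integer `[k]_q = 1 + q + ⋯ + q^{k-1}`. -/
def qint {R : Type*} [CommSemiring R] (q : R) (k : ℕ) : R := ∑ i ∈ range k, q ^ i

/-- Transport a colored permutation along an equality of sizes. -/
def castCP {ℓ a b : ℕ} (h : a = b) (σ : CP ℓ a) : CP ℓ b := h ▸ σ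

/-- Given a weakly increasing sequence `0 ≤ i_1 ≤ ⋯ ≤ i_m ≤ n` (here `s k = i_{k+1}`),
the set of (0-based) positions `i_j + j - 1` of the inserted fixed points
(1-based positions `i_j + j`). -/
def insPos {n m : ℕ} (s : Fin m → Fin (n + 1)) : Finset (Fin (n + m)) :=
  Finset.univ.image fun k : Fin m =>
    (⟨(s k : ℕ) + (k : ℕ), by have := (s k).isLt; have := k.isLt; omega⟩ : Fin (n + m))

/-! ### The derangement part through one enumeration -/

namespace CP

variable {ℓ : ℕ}

lemma mem_fixSet {n : ℕ} {τ : CP ℓ n} {i : Fin n} :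
    i ∈ fixSet τ ↔ τ.1 i = i ∧ (τ.2 i : ℕ) = 0 := by
  simp [fixSet]

lemma fix_le {n : ℕ} (τ : CP ℓ n) : fix τ ≤ n := by
  simpa [fix] using Finset.card_le_univ (fixSet τ)

/-- The values at non-fixed positions are exactly the non-fixed positions. -/
lemma image_compl_fixSet {n : ℕ} (τ : CP ℓ n) :
    ((fixSet τ)ᶜ).image τ.1 = (fixSet τ)ᶜ := by
  apply Finset.eq_of_subset_of_card_le
  · intro x hx
    obtain ⟨p, hp, rfl⟩ := Finset.mem_image.mp hx
    rw [Finset.mem_compl] at hp ⊢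
    intro h
    apply hp
    have h1 : τ.1 p = p := τ.1.injective (mem_fixSet.mp h).1
    rwa [h1] at h
  · rw [Finset.card_image_of_injective _ τ.1.injective]

lemma orderEmbOfFin_congr {n k : ℕ} {S T : Finset (Fin n)} (hST : S = T)
    (hS : S.card = k) (hT : T.card = k) (i : Fin k) :
    S.orderEmbOfFin hS i = T.orderEmbOfFin hT i := by
  subst hST; rfl

/-- Since non-fixed positions and their values form the same set, `Der τ` is `τ` conjugated by
the increasing enumeration of that set. -/
lemma apply_orderEmbOfFin_eq_Der {n : ℕ} (τ : CP ℓ n) (i : Fin (n - fix τ)) :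
    τ.1 (((fixSet τ)ᶜ).orderEmbOfFin (card_nonfix τ) i) =
      ((fixSet τ)ᶜ).orderEmbOfFin (card_nonfix τ) ((Der τ).1 i) := by
  rw [← orderEmbOfFin_congr (image_compl_fixSet τ) (card_vals τ) (card_nonfix τ)
    ((Der τ).1 i)]
  have h : (((fixSet τ)ᶜ).image τ.1).orderIsoOfFin (card_vals τ) ((Der τ).1 i) =
      derMid τ (((fixSet τ)ᶜ).orderIsoOfFin (card_nonfix τ) i) := by
    simp [Der]
  exact (congrArg Subtype.val h).symm

/-- `Der τ = σ` means that `τ` restricted to the complement of its fixed point set `F` is `σ`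
read along the increasing enumeration of that complement. -/
lemma castCP_Der_eq_iff {n k : ℕ} {τ : CP ℓ n} {σ : CP ℓ k} {F : Finset (Fin n)}
    (hF : fixSet τ = F) (hc : Fᶜ.card = k) (h : n - fix τ = k) :
    castCP h (Der τ) = σ ↔ ∀ i, τ.1 (Fᶜ.orderEmbOfFin hc i) = Fᶜ.orderEmbOfFin hc (σ.1 i) ∧
      τ.2 (Fᶜ.orderEmbOfFin hc i) = σ.2 i := by
  subst hF h
  constructor
  · rintro rfl i
    exact ⟨apply_orderEmbOfFin_eq_Der τ i, rfl⟩
  · intro H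
    refine Prod.ext (Equiv.ext fun i => ?_) (funext fun i => (H i).2)
    exact (((fixSet τ)ᶜ).orderEmbOfFin hc).injective
      ((apply_orderEmbOfFin_eq_Der τ i).symm.trans (H i).1)

lemma maj_castCP {a b : ℕ} (h : a = b) (τ : CP ℓ a) : maj (castCP h τ) = maj τ := by
  subst h; rfl

lemma exists_orderEmbOfFin_eq {n k : ℕ} {F : Finset (Fin n)} (hc : Fᶜ.card = k) {x : Fin n}
    (hx : x ∉ F) : ∃ i, Fᶜ.orderEmbOfFin hc i = x := by
  have : x ∈ Set.range (Fᶜ.orderEmbOfFin hc) := by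
    rw [Finset.range_orderEmbOfFin]; simpa using hx
  exact this

/-- A colored permutation is determined by its fixed point set and its derangement part. -/
lemma eq_of_fixSet_of_Der {n k : ℕ} {τ τ' : CP ℓ n} {σ : CP ℓ k} (hF : fixSet τ = fixSet τ')
    (h : n - fix τ = k) (h' : n - fix τ' = k) (hτ : castCP h (Der τ) = σ)
    (hτ' : castCP h' (Der τ') = σ) : τ = τ' := by
  have hc : ((fixSet τ')ᶜ).card = k := by rw [card_nonfix, h']
  rw [castCP_Der_eq_iff hF hc] at hτ
  rw [castCP_Der_eq_iff rfl hc] at hτ'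
  have key : ∀ x, τ.1 x = τ'.1 x ∧ τ.2 x = τ'.2 x := by
    intro x
    by_cases hx : x ∈ fixSet τ'
    · have h1 := mem_fixSet.mp hx
      have h2 := mem_fixSet.mp (hF ▸ hx)
      exact ⟨h2.1.trans h1.1.symm, Fin.ext (h2.2.trans h1.2.symm)⟩
    · obtain ⟨i, rfl⟩ := exists_orderEmbOfFin_eq hc hx
      exact ⟨(hτ i).1.trans (hτ' i).1.symm, (hτ i).2.trans (hτ' i).2.symm⟩
  exact Prod.ext (Equiv.ext fun x => (key x).1) (funext fun x => (key x).2)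

/-! ### Inserting a prescribed set of fixed points -/

/-- Every derangement `σ` extends to a colored permutation with derangement part `σ` and any
prescribed fixed point set of the right size. -/
lemma exists_insertion {n k : ℕ} (hℓ : 1 ≤ ℓ) (σ : CP ℓ k) (hσ : fix σ = 0)
    (F : Finset (Fin n)) (hc : Fᶜ.card = k) :
    ∃ τ : CP ℓ n, fixSet τ = F ∧ ∃ h : n - fix τ = k, castCP h (Der τ) = σ := by
  let e := Fᶜ.orderEmbOfFin hc
  let E := Fᶜ.orderIsoOfFin hc
  let τ : CP ℓ n := (σ.1.extendDomain E.toEquiv,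
    fun x => if hx : x ∈ Fᶜ then σ.2 (E.symm ⟨x, hx⟩) else ⟨0, hℓ⟩)
  have hτ1 : ∀ i, τ.1 (e i) = e (σ.1 i) := fun i =>
    Equiv.Perm.extendDomain_apply_image σ.1 E.toEquiv i
  have hτ2 : ∀ i, τ.2 (e i) = σ.2 i := by
    intro i
    have hi : e i ∈ Fᶜ := Finset.orderEmbOfFin_mem _ _ _
    have hE : (⟨e i, hi⟩ : {x // x ∈ Fᶜ}) = E i := Subtype.ext rfl
    simp only [τ, dif_pos hi, hE, OrderIso.symm_apply_apply]
  have hfix : fixSet τ = F := by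
    ext x
    rw [mem_fixSet]
    by_cases hx : x ∈ F
    · have hx' : ¬ x ∈ Fᶜ := by simpa using hx
      refine iff_of_true ⟨Equiv.Perm.extendDomain_apply_not_subtype _ _ hx', ?_⟩ hx
      simp only [τ, dif_neg hx']
    · refine iff_of_false ?_ hx
      obtain ⟨i, rfl⟩ := exists_orderEmbOfFin_eq hc hx
      rintro ⟨h1, h2⟩
      have hi : i ∈ fixSet σ :=
        mem_fixSet.mpr ⟨e.injective ((hτ1 i).symm.trans h1), by rw [← hτ2 i]; exact h2⟩
      rw [Finset.card_eq_zero.mp hσ] at hi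
      simp at hi
  have h : n - fix τ = k := by rw [← card_nonfix, hfix, hc]
  exact ⟨τ, hfix, h, (castCP_Der_eq_iff hfix hc h).mpr fun i => ⟨hτ1 i, hτ2 i⟩⟩

/-- Fixed points carry color `0`, so deleting them does not change `col`. -/
lemma col_eq_of_Der {n k : ℕ} {τ : CP ℓ n} {σ : CP ℓ k} (h : n - fix τ = k)
    (hτ : castCP h (Der τ) = σ) : col τ = col σ := by
  have hc : ((fixSet τ)ᶜ).card = k := by rw [card_nonfix, h]
  rw [castCP_Der_eq_iff rfl hc] at hτ
  unfold col
  rw [← Finset.sum_add_sum_compl (fixSet τ),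
    Finset.sum_eq_zero fun i hi => (mem_fixSet.mp hi).2, zero_add]
  have himg : (fixSet τ)ᶜ =
      Finset.univ.image (((fixSet τ)ᶜ).orderEmbOfFin hc) := by
    simp
  rw [himg, Finset.sum_image fun a _ b _ hab => (RelEmbedding.injective _) hab]
  exact Finset.sum_congr rfl fun i _ => by rw [(hτ i).2]

end CP

/-! ### Fixed point sets and weakly increasing sequences -/

/-- The position `i_{k+1} + k` (0-based) of the `k`-th inserted fixed point. -/
def insFun {n m : ℕ} (s : Fin m → Fin (n + 1)) (k : Fin m) : Fin (n + m) :=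
  ⟨(s k : ℕ) + (k : ℕ), by have := (s k).isLt; have := k.isLt; omega⟩

lemma insPos_eq_image {n m : ℕ} (s : Fin m → Fin (n + 1)) :
    insPos s = Finset.univ.image (insFun s) := rfl

lemma insFun_strictMono {n m : ℕ} {s : Fin m → Fin (n + 1)} (hs : Monotone s) :
    StrictMono (insFun s) := by
  intro a b hab
  have h1 : (s a : ℕ) ≤ s b := hs hab.le
  have h2 : (a : ℕ) < b := hab
  change (s a : ℕ) + a < s b + b
  omega

lemma card_insPos {n m : ℕ} {s : Fin m → Fin (n + 1)} (hs : Monotone s) :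
    (insPos s).card = m := by
  rw [insPos_eq_image, Finset.card_image_of_injective _ (insFun_strictMono hs).injective,
    Finset.card_univ, Fintype.card_fin]

lemma card_compl_insPos {n m : ℕ} {s : Fin m → Fin (n + 1)} (hs : Monotone s) :
    ((insPos s)ᶜ).card = n := by
  rw [Finset.card_compl, card_insPos hs, Fintype.card_fin, Nat.add_sub_cancel]

lemma insPos_injective {n m : ℕ} {s t : Fin m → Fin (n + 1)} (hs : Monotone s)
    (ht : Monotone t) (h : insPos s = insPos t) : s = t := by
  have hr : insFun s = insFun t := by
    rw [← (insFun_strictMono hs).range_inj (insFun_strictMono ht)]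
    have := congrArg (fun S : Finset (Fin (n + m)) => (S : Set (Fin (n + m)))) h
    simpa [insPos_eq_image] using this
  funext k
  have := congrArg Fin.val (congrFun hr k)
  simp only [insFun] at this
  exact Fin.ext (by omega)

/-- Every `m`-element set of positions arises from a weakly increasing sequence: subtract the
rank from the elements in increasing order. -/
lemma exists_insPos_eq {n m : ℕ} (F : Finset (Fin (n + m))) (hF : F.card = m) :
    ∃ s : Fin m → Fin (n + 1), Monotone s ∧ insPos s = F := by
  let f := F.orderEmbOfFin hF
  -- A strictly increasing sequence grows at least as fast as its index.
  have step : ∀ (d : ℕ) (a b : Fin m), (b : ℕ) = a + d → (f a : ℕ) + d ≤ f b := by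
    intro d
    induction d with
    | zero =>
      intro a b hab
      rw [show a = b from Fin.ext (by omega)]
      omega
    | succ d ih =>
      intro a b hab
      have hb := b.isLt
      have h1 := ih a ⟨a + d, by omega⟩ rfl
      have h2 : f ⟨a + d, by omega⟩ < f b :=
        f.strictMono (Fin.lt_def.mpr (by change (a : ℕ) + d < b; omega))
      have h3 : (f ⟨a + d, by omega⟩ : ℕ) < f b := h2
      omega
  have grow : ∀ a b : Fin m, a ≤ b → (f a : ℕ) + (b - a) ≤ f b := fun a b hab =>
    step _ a b (by have : (a : ℕ) ≤ b := hab; omega)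
  have lower : ∀ k : Fin m, (k : ℕ) ≤ f k := by
    intro k
    have hk := k.isLt
    have h1 := grow ⟨0, by omega⟩ k (Fin.le_def.mpr (Nat.zero_le _))
    simp only [Nat.sub_zero] at h1
    omega
  have upper : ∀ k : Fin m, (f k : ℕ) ≤ n + k := by
    intro k
    have hk := k.isLt
    have h1 := grow k ⟨m - 1, by omega⟩ (Fin.le_def.mpr (by change (k : ℕ) ≤ m - 1; omega))
    have h2 := (f ⟨m - 1, by omega⟩).isLt
    simp only at h1
    omega
  refine ⟨fun k => ⟨f k - k, by have := upper k; omega⟩, ?_, ?_⟩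
  · intro a b hab
    have h1 := grow a b hab
    have h2 : (a : ℕ) ≤ b := hab
    rw [Fin.le_def]
    change (f a : ℕ) - a ≤ f b - b
    omega
  · have hfun : insFun (fun k => (⟨f k - k, by have := upper k; omega⟩ : Fin (n + 1))) = f := by
      funext k
      have := lower k
      exact Fin.ext (Nat.sub_add_cancel this)
    rw [insPos_eq_image, hfun]
    simp [f]

lemma sum_insPos {n m : ℕ} {s : Fin m → Fin (n + 1)} (hs : Monotone s) :
    ∑ i ∈ insPos s, (i : ℕ) = (∑ k, (s k : ℕ)) + m.choose 2 := by
  rw [insPos_eq_image, Finset.sum_image fun a _ b _ h => (insFun_strictMono hs).injective h]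
  simp only [insFun, Finset.sum_add_distrib]
  rw [Fin.sum_univ_eq_sum_range (fun k => k) m, Finset.sum_range_id, Nat.choose_two_right]

/-- For a colored derangement `σ ∈ D_{ℓ,n}`, the insertion map
`(i_1,…,i_m) ↦ ⟨σ,i_1,…,i_m⟩` is a bijection from weakly increasing sequences
`0 ≤ i_1 ≤ ⋯ ≤ i_m ≤ n` onto `G(σ,m) = {τ ∈ G_{ℓ,n+m} : Der τ = σ}`; the fixed points of
`⟨σ,i_1,…,i_m⟩` are `i_1+1, …, i_m+m`, and
`fmaf ⟨σ,i_1,…,i_m⟩ = fmaj σ + ℓ(i_1+⋯+i_m)`. (The insertion map is characterized by the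
first two listed properties: a colored permutation is determined by its fixed point set
together with its derangement part.) -/
theorem insertion_bijection (ℓ n m : ℕ) (hℓ : 1 ≤ ℓ) (σ : CP ℓ n) (hσ : CP.fix σ = 0) :
    ∃ ins : {s : Fin m → Fin (n + 1) // Monotone s} → CP ℓ (n + m),
      (∀ s, CP.fixSet (ins s) = insPos s.1) ∧
      (∀ s, ∃ h : n + m - CP.fix (ins s) = n, castCP h (CP.Der (ins s)) = σ) ∧
      Function.Injective ins ∧
      (∀ τ : CP ℓ (n + m),
        (∃ h : n + m - CP.fix τ = n, castCP h (CP.Der τ) = σ) → ∃ s, ins s = τ) ∧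
      (∀ s, CP.fmaf (ins s) = CP.fmaj σ + ℓ * ∑ k : Fin m, ((s.1 k : ℕ))) := by
  have hex : ∀ s : {s : Fin m → Fin (n + 1) // Monotone s}, ∃ τ : CP ℓ (n + m),
      CP.fixSet τ = insPos s.1 ∧ ∃ h : n + m - CP.fix τ = n, castCP h (CP.Der τ) = σ :=
    fun s => CP.exists_insertion hℓ σ hσ _ (card_compl_insPos s.2)
  choose ins hfix hder using hex
  refine ⟨ins, hfix, hder, ?_, ?_, ?_⟩
  · intro s t hst
    exact Subtype.ext (insPos_injective s.2 t.2 (by rw [← hfix, ← hfix, hst]))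
  · rintro τ ⟨h, hτ⟩
    have hcard : (CP.fixSet τ).card = m := by
      have h1 := CP.fix_le τ
      change CP.fix τ = m
      omega
    obtain ⟨s, hs, hsF⟩ := exists_insPos_eq (CP.fixSet τ) hcard
    obtain ⟨h', hτ'⟩ := hder ⟨s, hs⟩
    exact ⟨⟨s, hs⟩, CP.eq_of_fixSet_of_Der ((hfix _).trans hsF) h' h hτ' hτ⟩
  · intro s
    obtain ⟨h, hτ⟩ := hder s
    have hmaj : CP.maj (CP.Der (ins s)) = CP.maj σ := by rw [← hτ, CP.maj_castCP]
    have hm : CP.fix (ins s) = m := by rw [CP.fix, hfix, card_insPos s.2]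
    unfold CP.fmaf CP.maf CP.fmaj
    rw [CP.col_eq_of_Der h hτ, hmaj, hm, hfix, sum_insPos s.2, Nat.add_sub_cancel]
    ring
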